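/- Fix 0 < η < 1/2. There exists a constant C = C(η) > 0 such that the following holds. Let A ∈ ℝ^{n×n} be symmetric, let E ⊆ {1,…,n} with |E| ≥ n(1 − η/3), let d be an integer with 1 ≤ d ≤ |E|/2, and fix a 0/1 vector z indexed by {1,…,n}∖E. Let x ∈ {0,1}^n be random, with its restriction to E uniformly distributed over 0/1 vectors with exactly d ones, and its restriction to the complement of E equal to z. Let A′ be the symmetric (n+1)×(n+1) matrix obtained from A by appending x as a new row and column with 0 as the new diagonal entry. If A has a kernel vector which is η-balanced, then Pr[rank A′ = rank A + 2] ≥ 1 − C/√d. -/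

import Mathlib

open scoped Classical
open Finset

/-- A vector is `η`-balanced if all of its level sets have size at most `(1−η)·n`. -/
def IsBalancedVec (η : ℝ) {n : ℕ} (v : Fin n → ℝ) : Prop :=
  ∀ a : ℝ, ({i | v i = a}.ncard : ℝ) ≤ (1 - η) * n

/-- The random 0/1 vector determined by the set `T ⊆ E` of coordinates of `E` equal
to 1, with the coordinates outside `E` given by `z`. -/
def xVec {n : ℕ} (E T : Finset (Fin n)) (z : Fin n → ℝ) : Fin n → ℝ :=
  fun i => if i ∈ T then 1 else if i ∈ E then 0 else z i

/-- The symmetric matrix obtained from `A` by appending `x` as a new row and column,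
with `0` as the new diagonal entry. -/
noncomputable def appendRowCol {n : ℕ} (A : Matrix (Fin n) (Fin n) ℝ)
    (x : Fin n → ℝ) : Matrix (Option (Fin n)) (Option (Fin n)) ℝ :=
  Matrix.of fun i j =>
    match i, j with
    | some a, some b => A a b
    | some a, none => x a
    | none, some b => x b
    | none, none => 0

/-!
If `v` is a kernel vector of `A` and `x ⬝ᵥ v ≠ 0`, then `x` lies outside the row space of the
symmetric matrix `A`, so appending it both as a row and as a column raises the rank by two. It
remains to bound the probability that the linear form `x ⬝ᵥ v` takes one prescribed value.

Since no level set of `v` covers almost all of `E`, a positive proportion of `E` can be partitioned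
into pairs of coordinates on which `v` differs. The law of the random `d`-set `T ⊆ E` is invariant
under exchanging the two elements of each pair independently with probability `1 / 2`. If `T` splits
`N` of the pairs, i.e. meets them in exactly one element, then, conditionally on `T`, the exchanges
turn `∑ i ∈ T, v i` into a sum of `N` independent two-valued steps, and by the
Erdős–Littlewood–Offord inequality it takes any given value with probability at most
`1 / √(N + 1)`. The variance of `N` is at most its mean, which is of order `d`, so by Chebyshev's
inequality this averages to `O(1 / √d)`.
-/

open scoped Matrix

section Rank

variable {K m n : Type*} [Field K]

lemma rank_eq_rank_submatrix_some_row_add_one [Finite m] [Fintype n]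
    (M : Matrix (Option m) n K) {v : n → K} (hv : M.submatrix some id *ᵥ v = 0)
    (hne : M none ⬝ᵥ v ≠ 0) :
    M.rank = (M.submatrix some id).rank + 1 := by
  have hrows : Set.range M.row = insert (M none) (Set.range (M.submatrix some id).row) := by
    ext y
    simp only [Set.mem_range, Option.exists, Set.mem_insert_iff, eq_comm (a := y)]
    rfl
  have hannihilate : Submodule.span K (Set.range (M.submatrix some id).row) ≤
      LinearMap.ker (dotProductBilin K K v) := by
    rw [Submodule.span_le]
    rintro _ ⟨i, rfl⟩
    exact (dotProduct_comm _ _).trans (congrFun hv i)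
  have hnotMem : M none ∉ Submodule.span K (Set.range (M.submatrix some id).row) := fun hmem =>
    hne (by simpa [dotProduct_comm] using hannihilate hmem)
  rw [Matrix.rank_eq_finrank_span_row, Matrix.rank_eq_finrank_span_row, hrows,
    Submodule.span_insert, sup_comm, Submodule.finrank_sup_span_singleton hnotMem]

lemma rank_eq_rank_submatrix_some_col_add_one [Fintype m] [Fintype n]
    (M : Matrix m (Option n) K) {u : m → K} (hu : u ᵥ* M.submatrix id some = 0)
    (hne : (u ⬝ᵥ fun i => M i none) ≠ 0) :
    M.rank = (M.submatrix id some).rank + 1 := by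
  rw [← Matrix.rank_transpose M, ← Matrix.rank_transpose (M.submatrix id some)]
  refine rank_eq_rank_submatrix_some_row_add_one Mᵀ (v := u) ?_ ?_
  · rwa [← Matrix.vecMul_transpose, Matrix.transpose_submatrix, Matrix.transpose_transpose]
  · rwa [dotProduct_comm]

lemma rank_eq_rank_submatrix_some_add_two [Fintype m] [Fintype n]
    (M : Matrix (Option m) (Option n) K) {u : m → K} {v : n → K}
    (hu : u ᵥ* M.submatrix some some = 0)
    (hv : M.submatrix some some *ᵥ v = 0) (hcol : (u ⬝ᵥ fun i => M (some i) none) ≠ 0)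
    (hrow : (fun j => M none (some j)) ⬝ᵥ v ≠ 0) :
    M.rank = (M.submatrix some some).rank + 2 := by
  have hrowRank : M.rank = (M.submatrix some id).rank + 1 := by
    refine rank_eq_rank_submatrix_some_row_add_one M (v := fun j => j.elim 0 v) ?_ ?_
    · ext i
      simpa [Matrix.mulVec, dotProduct, Fintype.sum_option] using congrFun hv i
    · simpa [dotProduct, Fintype.sum_option] using hrow
  rw [hrowRank, rank_eq_rank_submatrix_some_col_add_one (M.submatrix some id) hu hcol]
  rfl

end Rank

lemma rank_appendRowCol_eq_add_two {n : ℕ} {A : Matrix (Fin n) (Fin n) ℝ} (hA : A.IsSymm)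
    {x v : Fin n → ℝ} (hv : A *ᵥ v = 0) (hx : x ⬝ᵥ v ≠ 0) :
    (appendRowCol A x).rank = A.rank + 2 := by
  have hvA : v ᵥ* A = 0 := by rw [← Matrix.mulVec_transpose, hA.eq, hv]
  exact rank_eq_rank_submatrix_some_add_two (appendRowCol A x) hvA hv
    (by rwa [dotProduct_comm] at hx) hx

section LittlewoodOfford

variable {α G : Type*} [AddCommGroup G] [LinearOrder G] [IsOrderedAddMonoid G]

lemma centralBinom_sq_mul_le (m : ℕ) : m.centralBinom ^ 2 * (2 * m + 1) ≤ 16 ^ m := by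
  induction m with
  | zero => simp
  | succ m ih =>
    refine Nat.le_of_mul_le_mul_left ?_ (show 0 < (m + 1) ^ 2 by positivity)
    calc (m + 1) ^ 2 * ((m + 1).centralBinom ^ 2 * (2 * (m + 1) + 1))
        = ((m + 1) * (m + 1).centralBinom) ^ 2 * (2 * m + 3) := by ring
      _ = 4 * ((2 * m + 1) * (2 * m + 3)) * (m.centralBinom ^ 2 * (2 * m + 1)) := by
        rw [Nat.succ_mul_centralBinom_succ]; ring
      _ ≤ 4 * (4 * (m + 1) ^ 2) * 16 ^ m := by gcongr ?_ * ?_; nlinarith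
      _ = (m + 1) ^ 2 * 16 ^ (m + 1) := by ring

lemma choose_half_sq_mul_le (N : ℕ) : N.choose (N / 2) ^ 2 * (N + 1) ≤ 4 ^ N := by
  rcases Nat.even_or_odd' N with ⟨m, rfl | rfl⟩
  · simpa [Nat.centralBinom, pow_mul] using centralBinom_sq_mul_le m
  · have hchoose : (m + 1).centralBinom = 2 * (2 * m + 1).choose m := by
      rw [Nat.centralBinom_eq_two_mul_choose, mul_add_one, Nat.choose_succ_succ',
        Nat.choose_symm_half]
      ring
    have hcentral := centralBinom_sq_mul_le (m + 1)
    rw [hchoose] at hcentral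
    have hpow : 16 ^ (m + 1) = 4 * 4 ^ (2 * m + 1) := by
      rw [pow_succ 4 (2 * m), pow_mul]; ring
    rw [show (2 * m + 1) / 2 = m by omega]
    nlinarith

lemma choose_half_le_two_pow_div_sqrt (N : ℕ) : (N.choose (N / 2) : ℝ) ≤ 2 ^ N / √(N + 1) := by
  rw [le_div_iff₀ (by positivity)]
  refine le_of_sq_le_sq ?_ (by positivity)
  rw [mul_pow, Real.sq_sqrt (by positivity), ← pow_mul, mul_comm N, pow_mul]
  norm_num
  exact_mod_cast choose_half_sq_mul_le N

lemma sum_abs_symmDiff_eq [DecidableEq α] {w : α → G} {N : Finset α} (hneg : ∀ i ∈ N, w i ≤ 0)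
    (hpos : ∀ i ∉ N, 0 ≤ w i) (S : Finset α) :
    ∑ i ∈ symmDiff S N, |w i| = ∑ i ∈ S, w i - ∑ i ∈ N, w i := by
  have hSN : ∑ i ∈ S \ N, |w i| = ∑ i ∈ S \ N, w i :=
    sum_congr rfl fun i hi => abs_of_nonneg (hpos i (mem_sdiff.1 hi).2)
  have hNS : ∑ i ∈ N \ S, |w i| = -∑ i ∈ N \ S, w i := by
    rw [← sum_neg_distrib]
    exact sum_congr rfl fun i hi => abs_of_nonpos (hneg i (mem_sdiff.1 hi).1)
  rw [symmDiff_def, sup_eq_union, sum_union disjoint_sdiff_sdiff, hSN, hNS, ← sub_eq_add_neg,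
    sum_sdiff_sub_sum_sdiff]

-- Toggling the negative weights makes the solution family an antichain, since the sums of
-- absolute values over its members all agree.
lemma card_filter_sum_eq_le_choose_half [Fintype α] {w : α → G} (hw : ∀ i, w i ≠ 0) (c : G) :
    #{S : Finset α | ∑ i ∈ S, w i = c} ≤
      (Fintype.card α).choose (Fintype.card α / 2) := by
  set N : Finset α := {i | w i < 0} with hN
  have hsum := sum_abs_symmDiff_eq (w := w) (N := N) (fun i hi => by simp_all [le_of_lt])
    (fun i hi => by simpa [hN] using hi)
  rw [← card_image_of_injective _ (symmDiff_left_injective N)]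
  refine IsAntichain.sperner ?_
  simp only [coe_image, coe_filter, mem_univ, true_and]
  rintro _ ⟨S, hS : _ = c, rfl⟩ _ ⟨T, hT : _ = c, rfl⟩ hne (hsub : symmDiff S N ⊆ symmDiff T N)
  obtain ⟨i, hiT, hiS⟩ := exists_of_ssubset (hsub.ssubset_of_ne hne)
  have hlt : ∑ i ∈ symmDiff S N, |w i| < ∑ i ∈ symmDiff T N, |w i| :=
    sum_lt_sum_of_subset hsub hiT hiS (abs_pos.2 (hw i)) fun _ _ _ => abs_nonneg _
  rw [hsum, hsum, hS, hT] at hlt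
  exact hlt.false

lemma card_powerset_filter_sum_eq_le (X : Finset α) (w : α → G) (c : G) :
    #{S ∈ X.powerset | ∑ i ∈ S, w i = c} ≤
      (#{i ∈ X | w i ≠ 0}).choose (#{i ∈ X | w i ≠ 0} / 2) * 2 ^ #{i ∈ X | w i = 0} := by
  set J := {i ∈ X | w i ≠ 0} with hJ
  have hLO := card_filter_sum_eq_le_choose_half (w := fun i : J => w i)
    (fun i => (mem_filter.1 i.2).2) c
  rw [Fintype.card_coe] at hLO
  rw [← card_powerset]
  refine le_trans ?_ (Nat.mul_le_mul_right _ hLO)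
  rw [← card_product]
  refine card_le_card_of_injOn (fun S => (S.subtype (· ∈ J), {i ∈ S | w i = 0})) ?_ ?_
  · intro S hS
    obtain ⟨hSX, hSc⟩ : S ⊆ X ∧ ∑ i ∈ S, w i = c := by simpa using hS
    have hsum : ∑ i ∈ S.subtype (· ∈ J), w i = c := by
      rw [sum_subtype_eq_sum_filter, ← hSc]
      refine sum_subset (filter_subset _ _) fun i hi hiJ => ?_
      by_contra hwi
      exact hiJ (mem_filter.2 ⟨hi, mem_filter.2 ⟨hSX hi, hwi⟩⟩)
    simpa [hsum, subset_iff] using fun i hi hwi => And.intro (hSX hi) hwi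
  · intro S hS T hT hST
    have hSX : S ⊆ X := by simp_all
    have hTX : T ⊆ X := by simp_all
    simp only [Prod.mk.injEq, Finset.ext_iff, mem_subtype, mem_filter, Subtype.forall, hJ] at hST
    ext i
    have := @hSX i
    have := @hTX i
    grind

lemma card_powerset_filter_sum_eq_le_div_sqrt (X : Finset α) (w : α → G) (c : G) :
    (#{S ∈ X.powerset | ∑ i ∈ S, w i = c} : ℝ) ≤ 2 ^ #X / √(#{i ∈ X | w i ≠ 0} + 1) := by
  have hcard : #{i ∈ X | w i = 0} + #{i ∈ X | w i ≠ 0} = #X :=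
    card_filter_add_card_filter_not _
  calc (#{S ∈ X.powerset | ∑ i ∈ S, w i = c} : ℝ)
      ≤ (#{i ∈ X | w i ≠ 0}).choose (#{i ∈ X | w i ≠ 0} / 2) * 2 ^ #{i ∈ X | w i = 0} := by
        exact_mod_cast card_powerset_filter_sum_eq_le X w c
    _ ≤ 2 ^ #{i ∈ X | w i ≠ 0} / √(#{i ∈ X | w i ≠ 0} + 1) * 2 ^ #{i ∈ X | w i = 0} := by
        gcongr
        exact choose_half_le_two_pow_div_sqrt _
    _ = 2 ^ #X / √(#{i ∈ X | w i ≠ 0} + 1) := by rw [← hcard, pow_add]; ring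

end LittlewoodOfford

/-- The sets `{i, τ i}` with `i ∈ X` are pairwise disjoint two-element subsets of `E`. The pairs are
encoded by the global involution `τ` exchanging the two elements of each pair and fixing everything
else, together with a set `X` of representatives. -/
structure IsPairing {α : Type*} (E X : Finset α) (τ : α → α) : Prop where
  involutive : Function.Involutive τ
  subset : X ⊆ E
  apply_mem : ∀ i ∈ X, τ i ∈ E
  apply_notMem : ∀ i ∈ X, τ i ∉ X
  apply_eq_self : ∀ i ∉ X, τ i ∉ X → τ i = i

section Pairing

variable {α : Type*} {E X : Finset α} {τ : α → α}

lemma IsPairing.insert [DecidableEq α] {a b : α} (h : IsPairing (E \ {a, b}) X τ) (ha : a ∈ E)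
    (hb : b ∈ E) (hab : a ≠ b) :
    IsPairing E (insert a X) fun i => if i = a then b else if i = b then a else τ i := by
  obtain ⟨hinv, hsub, hmem, hnot, hself⟩ := h
  simp only [subset_iff, mem_sdiff, mem_insert, mem_singleton] at hsub hmem
  have ha' : τ a = a := hself a (by grind) (by grind [hinv a])
  have hb' : τ b = b := hself b (by grind) (by grind [hinv b])
  constructor
  · intro i
    grind [hinv i]
  · grind
  · grind
  · grind
  · grind

lemma exists_isPairing_of_ne [DecidableEq α] {β : Type*} (E : Finset α) (v : α → β) :
    ∃ X τ, IsPairing E X τ ∧ (∀ i ∈ X, v (τ i) ≠ v i) ∧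
      ∀ i ∈ E \ (X ∪ X.image τ), ∀ j ∈ E \ (X ∪ X.image τ), v i = v j := by
  induction E using Finset.strongInduction with
  | H E ih =>
    by_cases hconst : ∀ i ∈ E, ∀ j ∈ E, v i = v j
    · exact ⟨∅, id, ⟨fun _ => rfl, by simp, by simp, by simp, by simp⟩, by simp, by simpa⟩
    · push Not at hconst
      obtain ⟨a, ha, b, hb, hab⟩ := hconst
      obtain ⟨X, τ, hX, hne, hrest⟩ := ih (E \ {a, b}) (by grind)
      have hins := hX.insert ha hb (ne_of_apply_ne v hab)
      have hXab : ∀ i ∈ X, i ≠ a ∧ i ≠ b := fun i hi => by grind [hX.subset hi]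
      refine ⟨_, _, hins, by grind, ?_⟩
      have himage : X.image (fun i => if i = a then b else if i = b then a else τ i) =
          X.image τ := image_congr fun i hi => by grind
      rw [image_insert, himage]
      grind

lemma exists_isPairing_of_card_level_le {β : Type*} [DecidableEq β] {v : α → β} {s : ℕ}
    (hlevel : ∀ a, #{i ∈ E | v i = a} ≤ s) :
    ∃ X τ, IsPairing E X τ ∧ (∀ i ∈ X, v (τ i) ≠ v i) ∧ #E ≤ 2 * #X + s := by
  obtain ⟨X, τ, hX, hne, hrest⟩ := exists_isPairing_of_ne E v
  refine ⟨X, τ, hX, hne, ?_⟩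
  have hunpaired : #(E \ (X ∪ X.image τ)) ≤ s := by
    rcases (E \ (X ∪ X.image τ)).eq_empty_or_nonempty with hempty | ⟨j, hj⟩
    · simp [hempty]
    · refine (card_le_card fun i hi => ?_).trans (hlevel (v j))
      exact mem_filter.2 ⟨(mem_sdiff.1 hi).1, hrest i hi j hj⟩
  calc #E ≤ #(E \ (X ∪ X.image τ)) + #(X ∪ X.image τ) := card_le_card_sdiff_add_card
    _ ≤ s + (#X + #X) := by
      gcongr
      exact (card_union_le _ _).trans (Nat.add_le_add_left card_image_le _)
    _ = 2 * #X + s := by ring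

lemma card_powersetCard_filter_sum_comp_perm {G : Type*} [AddCommMonoid G]
    [DecidableEq G] (σ : Equiv.Perm α)
    (hσ : E.map σ.toEmbedding = E) (d : ℕ) (v : α → G) (c : G) :
    #{T ∈ powersetCard d E | ∑ i ∈ T, v (σ i) = c} =
      #{T ∈ powersetCard d E | ∑ i ∈ T, v i = c} := by
  refine card_equiv σ.finsetCongr fun T => ?_
  have hsub : T.map σ.toEmbedding ⊆ E ↔ T ⊆ E := by
    conv_lhs => rw [← hσ, map_subset_map]
  simp [hsub]

variable [DecidableEq α]

/-- The representatives of the pairs `{i, τ i}`, `i ∈ X`, having exactly one element in `T`. -/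
def splitPairs (X : Finset α) (τ : α → α) (T : Finset α) : Finset α :=
  {i ∈ X | i ∈ T ↔ τ i ∉ T}

lemma subset_splitPairs_iff {J T : Finset α} (hJ : J ⊆ X) :
    J ⊆ splitPairs X τ T ↔ ∀ i ∈ J, (i ∈ T ↔ τ i ∉ T) := by
  simp only [splitPairs, subset_iff, mem_filter]
  exact forall₂_congr fun i hi => and_iff_right (hJ hi)

/-- Exchanges the two elements of every pair `{i, τ i}` meeting `S`. -/
def swapOn (τ : α → α) (S : Finset α) (i : α) : α :=
  if i ∈ S ∨ τ i ∈ S then τ i else i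

lemma swapOn_involutive (hτ : Function.Involutive τ) (S : Finset α) :
    Function.Involutive (swapOn τ S) := fun i => by
  grind [swapOn, hτ i]

lemma IsPairing.swapOn_mem (h : IsPairing E X τ) {S : Finset α} (hS : S ⊆ X) {i : α}
    (hi : i ∈ E) : swapOn τ S i ∈ E := by
  grind [swapOn, h.apply_mem i, h.subset]

lemma IsPairing.card_powersetCard_filter_sum_swapOn_eq {G : Type*} [AddCommMonoid G]
    [DecidableEq G] (h : IsPairing E X τ) {S : Finset α} (hS : S ⊆ X) (d : ℕ) (v : α → G) (c : G) :
    #{T ∈ powersetCard d E | ∑ i ∈ T, v (swapOn τ S i) = c} =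
      #{T ∈ powersetCard d E | ∑ i ∈ T, v i = c} := by
  refine card_powersetCard_filter_sum_comp_perm (swapOn_involutive h.involutive S).toPerm ?_ d v c
  refine eq_of_subset_of_card_le (fun i hi => ?_) (card_map _).ge
  obtain ⟨j, hj, rfl⟩ := mem_map.1 hi
  exact h.swapOn_mem hS hj

section SwapGain

variable {G : Type*} [AddCommGroup G]

/-- The change in `∑ i ∈ T, v i` when `i` and `τ i` are exchanged. -/
def swapGain (v : α → G) (τ : α → α) (T : Finset α) (i : α) : G :=
  (if i ∈ T then v (τ i) - v i else 0) + if τ i ∈ T then v i - v (τ i) else 0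

lemma swapGain_ne_zero_iff {v : α → G} {T : Finset α} {i : α} (hne : v (τ i) ≠ v i) :
    swapGain v τ T i ≠ 0 ↔ (i ∈ T ↔ τ i ∉ T) := by
  by_cases hi : i ∈ T <;> by_cases hτi : τ i ∈ T <;>
    simp [swapGain, hi, hτi, sub_eq_zero, hne, hne.symm]

lemma IsPairing.sum_swapOn (h : IsPairing E X τ) {S : Finset α} (hS : S ⊆ X) (T : Finset α)
    (v : α → G) : ∑ i ∈ T, v (swapOn τ S i) = ∑ i ∈ T, v i + ∑ i ∈ S, swapGain v τ T i := by
  have hpoint (i : α) : v (swapOn τ S i) = v i +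
      ((if i ∈ S then v (τ i) - v i else 0) + if τ i ∈ S then v (τ i) - v i else 0) := by
    have hnot : i ∈ S → τ i ∉ S := fun hi hτi => h.apply_notMem i (hS hi) (hS hτi)
    by_cases hi : i ∈ S <;> by_cases hτi : τ i ∈ S <;> simp_all [swapOn]
  have hrepr : ∑ i ∈ T, (if i ∈ S then v (τ i) - v i else 0) =
      ∑ i ∈ S, if i ∈ T then v (τ i) - v i else 0 := by
    rw [sum_ite_mem, sum_ite_mem, inter_comm]
  have hpartner : ∑ i ∈ T, (if τ i ∈ S then v (τ i) - v i else 0) =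
      ∑ i ∈ S, if τ i ∈ T then v i - v (τ i) else 0 := by
    rw [← sum_filter, ← sum_filter]
    refine sum_nbij' τ τ ?_ ?_ ?_ ?_ ?_ <;> simp +contextual [h.involutive _]
  simp only [hpoint, sum_add_distrib, hrepr, hpartner, swapGain]

end SwapGain

end Pairing

section Counting

variable {α : Type*} [DecidableEq α] {E X : Finset α} {τ : α → α}

lemma card_powersetCard_filter_inter_eq {D Y : Finset α} (hD : D ⊆ E) (hY : Y ⊆ D) {d : ℕ}
    (hd : #Y ≤ d) :
    #{T ∈ powersetCard d E | T ∩ D = Y} = (#E - #D).choose (d - #Y) := by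
  rw [← card_sdiff_of_subset hD, ← card_powersetCard]
  refine card_nbij' (· \ D) (· ∪ Y) ?_ ?_ ?_ ?_
  · intro T hT
    obtain ⟨⟨hTE, hTd⟩, hTD⟩ : (T ⊆ E ∧ #T = d) ∧ T ∩ D = Y := by simpa using hT
    have hcard := card_sdiff_add_card_inter T D
    rw [hTD, hTd] at hcard
    have hcard' : #(T \ D) = d - #Y := by omega
    exact mem_powersetCard.2 ⟨sdiff_subset_sdiff hTE le_rfl, hcard'⟩
  · intro R hR
    obtain ⟨hRE, hRd⟩ : R ⊆ E \ D ∧ #R = d - #Y := by simpa using hR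
    have hdisj : Disjoint R D := disjoint_of_subset_left hRE sdiff_disjoint
    have hcard := card_union_of_disjoint (hdisj.mono_right hY)
    have hinter : (R ∪ Y) ∩ D = Y := by
      rw [union_inter_distrib_right, disjoint_iff_inter_eq_empty.1 hdisj, empty_union,
        inter_eq_left.2 hY]
    simpa [hinter] using
      ⟨union_subset (hRE.trans sdiff_subset) (hY.trans hD), by omega⟩
  · intro T hT
    obtain ⟨-, hTD⟩ : _ ∧ T ∩ D = Y := by simpa using hT
    simp [← hTD, sdiff_union_inter]
  · intro R hR
    obtain ⟨hRE, -⟩ : R ⊆ E \ D ∧ _ := by simpa using hR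
    have hdisj : Disjoint R D := disjoint_of_subset_left hRE sdiff_disjoint
    simp [union_sdiff_distrib, sdiff_eq_empty_iff_subset.2 hY, hdisj.sdiff_eq_left]

lemma IsPairing.card_transversal (h : IsPairing E X τ) {U J : Finset α} (hJ : J ⊆ X)
    (hU : U ⊆ J) : #(U ∪ (J \ U).image τ) = #J := by
  have hdisj : Disjoint U ((J \ U).image τ) := by
    rw [disjoint_left]
    grind [h.apply_notMem]
  rw [card_union_of_disjoint hdisj, card_image_of_injective _ h.involutive.injective,
    add_comm, card_sdiff_add_card_eq_card hU]

lemma IsPairing.card_union_image (h : IsPairing E X τ) {J : Finset α} (hJ : J ⊆ X) :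
    #(J ∪ J.image τ) = 2 * #J := by
  have hdisj : Disjoint J (J.image τ) := by
    rw [disjoint_left]
    grind [h.apply_notMem]
  rw [card_union_of_disjoint hdisj, card_image_of_injective _ h.involutive.injective, two_mul]

lemma IsPairing.inter_union_image_eq_transversal_iff (h : IsPairing E X τ) {U J : Finset α}
    (hJ : J ⊆ X) (hU : U ⊆ J) (T : Finset α) :
    T ∩ (J ∪ J.image τ) = U ∪ (J \ U).image τ ↔
      (∀ i ∈ J, (i ∈ T ↔ τ i ∉ T)) ∧ J ∩ T = U := by
  have hnot : ∀ i ∈ J, τ i ∉ J := fun i hi hτi => h.apply_notMem i (hJ hi) (hJ hτi)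
  have hinj := h.involutive.injective
  constructor
  · intro hinter
    have hrepr : ∀ i ∈ J, (i ∈ T ↔ i ∈ U) := fun i hi => by
      have := Finset.ext_iff.1 hinter i
      grind
    have hpartner : ∀ i ∈ J, (τ i ∈ T ↔ i ∉ U) := fun i hi => by
      have := Finset.ext_iff.1 hinter (τ i)
      simp only [mem_inter, mem_union, hinj.mem_finset_image, mem_sdiff] at this
      grind
    exact ⟨fun i hi => by rw [hrepr i hi, hpartner i hi, not_not], by grind⟩
  · rintro ⟨hsplit, rfl⟩
    ext i
    simp only [mem_inter, mem_union, mem_image, mem_sdiff]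
    grind

-- A set splitting all pairs in `J` meets their union in one of `2 ^ #J` transversals.
lemma IsPairing.card_powersetCard_filter_subset_splitPairs (h : IsPairing E X τ) {J : Finset α}
    (hJ : J ⊆ X) {d : ℕ} (hd : #J ≤ d) :
    #{T ∈ powersetCard d E | J ⊆ splitPairs X τ T} =
      2 ^ #J * (#E - 2 * #J).choose (d - #J) := by
  have hJE : J ∪ J.image τ ⊆ E :=
    union_subset (hJ.trans h.subset) (image_subset_iff.2 fun i hi => h.apply_mem i (hJ hi))
  have hfiber : ∀ U ∈ J.powerset,
      #{T ∈ {T ∈ powersetCard d E | J ⊆ splitPairs X τ T} | J ∩ T = U} =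
        (#E - 2 * #J).choose (d - #J) := by
    intro U hU
    rw [mem_powerset] at hU
    have htrans : U ∪ (J \ U).image τ ⊆ J ∪ J.image τ :=
      union_subset_union hU (image_subset_image sdiff_subset)
    rw [← h.card_union_image hJ, ← h.card_transversal hJ hU,
      ← card_powersetCard_filter_inter_eq hJE htrans (h.card_transversal hJ hU ▸ hd),
      filter_filter]
    refine congrArg card (filter_congr fun T _ => ?_)
    rw [subset_splitPairs_iff hJ, h.inter_union_image_eq_transversal_iff hJ hU]
  rw [card_eq_sum_card_fiberwise (f := (J ∩ ·)) (t := J.powerset) (by simp [Set.MapsTo]),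
    sum_congr rfl hfiber, sum_const, card_powerset, smul_eq_mul]

lemma IsPairing.sum_choose_card_splitPairs (h : IsPairing E X τ) {d j : ℕ} (hj : j ≤ d) :
    ∑ T ∈ powersetCard d E, (#(splitPairs X τ T)).choose j =
      (#X).choose j * (2 ^ j * (#E - 2 * j).choose (d - j)) := by
  have hchoose (T : Finset α) : (#(splitPairs X τ T)).choose j =
      #{J ∈ powersetCard j X | J ⊆ splitPairs X τ T} := by
    rw [← card_powersetCard]
    refine congrArg card ?_
    ext J
    simp only [mem_powersetCard, mem_filter]
    grind [splitPairs]
  calc ∑ T ∈ powersetCard d E, (#(splitPairs X τ T)).choose j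
      = ∑ J ∈ powersetCard j X, #{T ∈ powersetCard d E | J ⊆ splitPairs X τ T} := by
        simp only [hchoose]
        exact sum_card_bipartiteAbove_eq_sum_card_bipartiteBelow _
    _ = ∑ J ∈ powersetCard j X, 2 ^ j * (#E - 2 * j).choose (d - j) := by
        refine sum_congr rfl fun J hJ => ?_
        obtain ⟨hJX, rfl⟩ := mem_powersetCard.1 hJ
        exact h.card_powersetCard_filter_subset_splitPairs hJX hj
    _ = (#X).choose j * (2 ^ j * (#E - 2 * j).choose (d - j)) := by
        rw [sum_const, card_powersetCard, smul_eq_mul]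

end Counting

section Averaging

variable {α G : Type*} [DecidableEq α] [AddCommGroup G] [LinearOrder G] [IsOrderedAddMonoid G]
  {E X : Finset α} {τ : α → α} {v : α → G}

lemma IsPairing.card_powerset_filter_sum_swapOn_eq_le (h : IsPairing E X τ)
    (hne : ∀ i ∈ X, v (τ i) ≠ v i) (T : Finset α) (c : G) :
    (#{S ∈ X.powerset | ∑ i ∈ T, v (swapOn τ S i) = c} : ℝ) ≤
      2 ^ #X / √(#(splitPairs X τ T) + 1) := by
  have hsplit : splitPairs X τ T = {i ∈ X | swapGain v τ T i ≠ 0} :=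
    filter_congr fun i hi => (swapGain_ne_zero_iff (hne i hi)).symm
  have hshift : ∀ S ∈ X.powerset, (∑ i ∈ T, v (swapOn τ S i) = c ↔
      ∑ i ∈ S, swapGain v τ T i = c - ∑ i ∈ T, v i) := fun S hS => by
    rw [h.sum_swapOn (mem_powerset.1 hS), eq_sub_iff_add_eq']
  rw [filter_congr hshift, hsplit]
  exact card_powerset_filter_sum_eq_le_div_sqrt X (swapGain v τ T) _

-- Swapping the pairs in a uniformly random `S ⊆ X` preserves the law of a uniformly random `T`,
-- and given `T` the swapped sum is a signed sum with one nonzero step for every split pair.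
lemma IsPairing.card_powersetCard_filter_sum_eq_le (h : IsPairing E X τ)
    (hne : ∀ i ∈ X, v (τ i) ≠ v i) (d : ℕ) (c : G) :
    (#{T ∈ powersetCard d E | ∑ i ∈ T, v i = c} : ℝ) ≤
      ∑ T ∈ powersetCard d E, 1 / √(#(splitPairs X τ T) + 1) := by
  have hdouble : 2 ^ #X * #{T ∈ powersetCard d E | ∑ i ∈ T, v i = c} =
      ∑ T ∈ powersetCard d E, #{S ∈ X.powerset | ∑ i ∈ T, v (swapOn τ S i) = c} := by
    calc 2 ^ #X * #{T ∈ powersetCard d E | ∑ i ∈ T, v i = c}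
        = ∑ S ∈ X.powerset, #{T ∈ powersetCard d E | ∑ i ∈ T, v (swapOn τ S i) = c} := by
          rw [sum_congr rfl fun S hS =>
            h.card_powersetCard_filter_sum_swapOn_eq (mem_powerset.1 hS) d v c,
            sum_const, card_powerset, smul_eq_mul]
      _ = ∑ T ∈ powersetCard d E, #{S ∈ X.powerset | ∑ i ∈ T, v (swapOn τ S i) = c} :=
          sum_card_bipartiteAbove_eq_sum_card_bipartiteBelow _
  refine le_of_mul_le_mul_left ?_ (show (0 : ℝ) < 2 ^ #X by positivity)
  calc (2 : ℝ) ^ #X * #{T ∈ powersetCard d E | ∑ i ∈ T, v i = c}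
      = ∑ T ∈ powersetCard d E, (#{S ∈ X.powerset | ∑ i ∈ T, v (swapOn τ S i) = c} : ℝ) := by
        exact_mod_cast hdouble
    _ ≤ ∑ T ∈ powersetCard d E, 2 ^ #X / √(#(splitPairs X τ T) + 1) :=
        sum_le_sum fun T _ => h.card_powerset_filter_sum_swapOn_eq_le hne T c
    _ = 2 ^ #X * ∑ T ∈ powersetCard d E, 1 / √(#(splitPairs X τ T) + 1) := by
        simp only [mul_sum, mul_one_div]

end Averaging

section Concentration

lemma choose_succ_add_succ_mul (a b : ℕ) :
    (a + b + 2).choose (a + 1) * ((a + 1) * (b + 1)) =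
      (a + b + 2) * ((a + b + 1) * (a + b).choose a) := by
  have htop : (a + b + 2) * (a + b + 1).choose a = (a + b + 2).choose (a + 1) * (a + 1) :=
    Nat.add_one_mul_choose_eq (a + b + 1) a
  have hsub : (a + b).choose a * (a + b + 1) = (a + b + 1).choose a * (b + 1) := by
    simpa [show a + b + 1 - a = b + 1 by omega] using Nat.choose_mul_succ_eq (a + b) a
  linear_combination (b + 1) * -htop - (a + b + 2) * hsub

lemma add_two_mul_choose_mul_choose_le (a b : ℕ) :
    (a + b + 2) * ((a + b + 4).choose (a + 2) * (a + b).choose a) ≤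
      (a + b + 4) * (a + b + 2).choose (a + 1) ^ 2 := by
  have hlow := choose_succ_add_succ_mul a b
  have hhigh : (a + b + 4).choose (a + 2) * ((a + 2) * (b + 2)) =
      (a + b + 4) * ((a + b + 3) * (a + b + 2).choose (a + 1)) := by
    convert choose_succ_add_succ_mul (a + 1) (b + 1) using 2 <;> ring_nf
  have hpoly : (a + b + 3) * ((a + 1) * (b + 1)) ≤ (a + b + 1) * ((a + 2) * (b + 2)) := by
    nlinarith
  refine Nat.le_of_mul_le_mul_left ?_
    (show 0 < (a + b + 1) * ((a + 2) * (b + 2)) by positivity)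
  calc (a + b + 1) * ((a + 2) * (b + 2)) *
        ((a + b + 2) * ((a + b + 4).choose (a + 2) * (a + b).choose a))
      = ((a + b + 4).choose (a + 2) * ((a + 2) * (b + 2))) *
          ((a + b + 2) * ((a + b + 1) * (a + b).choose a)) := by ring
    _ = (a + b + 3) * ((a + 1) * (b + 1)) *
          ((a + b + 4) * (a + b + 2).choose (a + 1) ^ 2) := by rw [hhigh, ← hlow]; ring
    _ ≤ _ := Nat.mul_le_mul_right _ hpoly

lemma sub_one_mul_choose_mul_choose_le {m d k : ℕ} (hd : 2 ≤ d) (hdm : d + 2 ≤ m)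
    (hk : 2 * k ≤ m) :
    (k - 1 : ℝ) * ((m - 4).choose (d - 2) * m.choose d) ≤ k * (m - 2).choose (d - 1) ^ 2 := by
  obtain ⟨a, rfl⟩ := Nat.exists_eq_add_of_le' hd
  obtain ⟨b, rfl⟩ := Nat.exists_eq_add_of_le hdm
  have hlog : (a + b + 2 : ℝ) * ((a + b + 4).choose (a + 2) * (a + b).choose a) ≤
      (a + b + 4) * (a + b + 2).choose (a + 1) ^ 2 := by
    exact_mod_cast add_two_mul_choose_mul_choose_le a b
  have hk' : (2 * k : ℝ) ≤ a + b + 4 := by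
    have : 2 * k ≤ a + b + 4 := by omega
    exact_mod_cast this
  rw [show a + 2 + 2 + b = a + b + 4 by ring, show a + b + 4 - 4 = a + b by omega,
    show a + b + 4 - 2 = a + b + 2 by omega, Nat.add_sub_cancel,
    show a + 2 - 1 = a + 1 by omega]
  refine le_of_mul_le_mul_left ?_ (show (0 : ℝ) < a + b + 4 by positivity)
  calc (a + b + 4 : ℝ) * ((k - 1) * ((a + b).choose a * (a + b + 4).choose (a + 2)))
      = (a + b + 4) * (k - 1) * ((a + b + 4).choose (a + 2) * (a + b).choose a) := by ring
    _ ≤ k * (a + b + 2) * ((a + b + 4).choose (a + 2) * (a + b).choose a) := by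
        gcongr ?_ * _
        linarith
    _ ≤ k * ((a + b + 4) * (a + b + 2).choose (a + 1) ^ 2) := by
        rw [mul_assoc]
        gcongr
    _ = (a + b + 4) * (k * (a + b + 2).choose (a + 1) ^ 2) := by ring

lemma mul_choose_le_two_mul_mul_choose {m d : ℕ} (hd : 1 ≤ d) (hdm : 2 * d ≤ m) :
    d * m.choose d ≤ 2 * m * (m - 2).choose (d - 1) := by
  obtain ⟨a, rfl⟩ := Nat.exists_eq_add_of_le' hd
  obtain ⟨b, rfl⟩ := Nat.exists_eq_add_of_le' (show a + 2 ≤ m by omega)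
  have hstep := choose_succ_add_succ_mul a b
  rw [show b + (a + 2) = a + b + 2 by ring] at *
  simp only [Nat.add_sub_cancel]
  refine Nat.le_of_mul_le_mul_left ?_ (show 0 < b + 1 by positivity)
  calc (b + 1) * ((a + 1) * (a + b + 2).choose (a + 1))
      = (a + b + 1) * ((a + b + 2) * (a + b).choose a) := by rw [mul_comm (a + 1)]; linarith
    _ ≤ (2 * (b + 1)) * ((a + b + 2) * (a + b).choose a) := Nat.mul_le_mul_right _ (by omega)
    _ = (b + 1) * (2 * (a + b + 2) * (a + b).choose a) := by ring

variable {α : Type*} {E X : Finset α} {τ : α → α}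

lemma IsPairing.two_mul_card_le (h : IsPairing E X τ) : 2 * #X ≤ #E := by
  rw [← h.card_union_image le_rfl]
  exact card_le_card (union_subset h.subset (image_subset_iff.2 h.apply_mem))

variable [DecidableEq α]

lemma IsPairing.sum_card_splitPairs (h : IsPairing E X τ) {d : ℕ} (hd : 1 ≤ d) :
    ∑ T ∈ powersetCard d E, #(splitPairs X τ T) = 2 * #X * (#E - 2).choose (d - 1) := by
  simpa [mul_left_comm, mul_assoc] using h.sum_choose_card_splitPairs hd

lemma IsPairing.sum_card_splitPairs_mul_sub_one (h : IsPairing E X τ) {d : ℕ} (hd : 2 ≤ d) :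
    ∑ T ∈ powersetCard d E, (#(splitPairs X τ T) : ℝ) * (#(splitPairs X τ T) - 1) =
      4 * (#X * (#X - 1)) * (#E - 4).choose (d - 2) := by
  have hpairs : ∑ T ∈ powersetCard d E, ((#(splitPairs X τ T)).choose 2 : ℝ) =
      (#X).choose 2 * (2 ^ 2 * (#E - 4).choose (d - 2)) := by
    exact_mod_cast h.sum_choose_card_splitPairs hd
  simp only [Nat.cast_choose_two, ← sum_div] at hpairs
  linarith

-- The variance is at most the mean `μ` because the second factorial moment is at most `μ ^ 2`.
lemma IsPairing.sum_card_splitPairs_sub_sq_le (h : IsPairing E X τ) {d : ℕ} (hd : 2 ≤ d)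
    (hdE : d + 2 ≤ #E) {μ : ℝ}
    (hμ : ∑ T ∈ powersetCard d E, (#(splitPairs X τ T) : ℝ) = μ * #(powersetCard d E)) :
    ∑ T ∈ powersetCard d E, (#(splitPairs X τ T) - μ) ^ 2 ≤ μ * #(powersetCard d E) := by
  set m := #(powersetCard d E) with hm
  have hmean : 2 * #X * ((#E - 2).choose (d - 1) : ℝ) = μ * m := by
    rw [← hμ]
    exact_mod_cast (h.sum_card_splitPairs (one_le_two.trans hd)).symm
  have hfactorial : ∑ T ∈ powersetCard d E,
      (#(splitPairs X τ T) : ℝ) * (#(splitPairs X τ T) - 1) ≤ μ ^ 2 * m := by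
    refine le_of_mul_le_mul_right ?_ (show (0 : ℝ) < m by
      rw [hm, card_powersetCard]; exact_mod_cast Nat.choose_pos (by omega))
    rw [h.sum_card_splitPairs_mul_sub_one hd]
    calc 4 * (#X * (#X - 1 : ℝ)) * ((#E - 4).choose (d - 2)) * m
        = 4 * #X * ((#X - 1) * ((#E - 4).choose (d - 2) * m)) := by ring
      _ ≤ 4 * #X * (#X * (#E - 2).choose (d - 1) ^ 2) := by
        rw [hm, card_powersetCard]
        exact mul_le_mul_of_nonneg_left
          (sub_one_mul_choose_mul_choose_le hd hdE h.two_mul_card_le) (by positivity)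
      _ = (μ * m) ^ 2 := by rw [← hmean]; ring
      _ = μ ^ 2 * m * m := by ring
  calc ∑ T ∈ powersetCard d E, (#(splitPairs X τ T) - μ) ^ 2
      = ∑ T ∈ powersetCard d E, ((#(splitPairs X τ T) : ℝ) * (#(splitPairs X τ T) - 1) +
          (1 - 2 * μ) * #(splitPairs X τ T) + μ ^ 2) := sum_congr rfl fun T _ => by ring
    _ = ∑ T ∈ powersetCard d E, (#(splitPairs X τ T) : ℝ) * (#(splitPairs X τ T) - 1) +
          (1 - 2 * μ) * (μ * m) + m * μ ^ 2 := by
        rw [sum_add_distrib, sum_add_distrib, ← mul_sum, hμ, sum_const, nsmul_eq_mul]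
    _ ≤ μ * m := by linarith

lemma one_div_sqrt_add_one_le {μ x : ℝ} (hμ : 0 < μ) (hx : 0 ≤ x) :
    1 / √(x + 1) ≤ √(2 / μ) + 4 / μ ^ 2 * (x - μ) ^ 2 := by
  rcases le_total (μ / 2) x with hlarge | hsmall
  · calc 1 / √(x + 1) = √(1 / (x + 1)) := by simp
      _ ≤ √(2 / μ) := by
        refine Real.sqrt_le_sqrt ?_
        rw [div_le_div_iff₀ (by positivity) hμ]
        linarith
      _ ≤ √(2 / μ) + 4 / μ ^ 2 * (x - μ) ^ 2 := le_add_of_nonneg_right (by positivity)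
  · calc 1 / √(x + 1) ≤ 1 := (div_le_one (by positivity)).2 (Real.one_le_sqrt.2 (by linarith))
      _ = 4 / μ ^ 2 * (μ / 2) ^ 2 := by field_simp; norm_num
      _ ≤ 4 / μ ^ 2 * (x - μ) ^ 2 := by
        gcongr 4 / μ ^ 2 * ?_
        nlinarith
      _ ≤ √(2 / μ) + 4 / μ ^ 2 * (x - μ) ^ 2 := le_add_of_nonneg_left (by positivity)

lemma sum_one_div_sqrt_add_one_le {ι : Type*} {s : Finset ι} {f : ι → ℝ} {μ : ℝ} (hμ : 0 < μ)
    (hf : ∀ i ∈ s, 0 ≤ f i) (hvar : ∑ i ∈ s, (f i - μ) ^ 2 ≤ μ * #s) :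
    ∑ i ∈ s, 1 / √(f i + 1) ≤ (√(2 / μ) + 4 / μ) * #s :=
  calc ∑ i ∈ s, 1 / √(f i + 1)
      ≤ ∑ i ∈ s, (√(2 / μ) + 4 / μ ^ 2 * (f i - μ) ^ 2) :=
        sum_le_sum fun i hi => one_div_sqrt_add_one_le hμ (hf i hi)
    _ = #s * √(2 / μ) + 4 / μ ^ 2 * ∑ i ∈ s, (f i - μ) ^ 2 := by
        rw [sum_add_distrib, sum_const, nsmul_eq_mul, mul_sum]
    _ ≤ #s * √(2 / μ) + 4 / μ ^ 2 * (μ * #s) := by gcongr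
    _ = (√(2 / μ) + 4 / μ) * #s := by field_simp

end Concentration

section Slice

variable {α G : Type*} [AddCommGroup G] [LinearOrder G] [IsOrderedAddMonoid G]
  {E X : Finset α} {τ : α → α} {v : α → G} {δ : ℝ} {d : ℕ}

lemma IsPairing.mul_card_powersetCard_le_sum_card_splitPairs [DecidableEq α]
    (h : IsPairing E X τ) (hδ : 0 ≤ δ) (hX : δ * #E ≤ #X) (hd : 1 ≤ d) (hdE : 2 * d ≤ #E) :
    δ * d * #(powersetCard d E) ≤ ∑ T ∈ powersetCard d E, (#(splitPairs X τ T) : ℝ) :=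
  calc δ * d * #(powersetCard d E) = δ * (d * (#E).choose d : ℕ) := by
        rw [card_powersetCard]; push_cast; ring
    _ ≤ δ * (2 * #E * (#E - 2).choose (d - 1) : ℕ) := by
        gcongr δ * Nat.cast ?_
        exact mul_choose_le_two_mul_mul_choose hd hdE
    _ = 2 * (δ * #E) * (#E - 2).choose (d - 1) := by push_cast; ring
    _ ≤ 2 * #X * (#E - 2).choose (d - 1) := by gcongr
    _ = ∑ T ∈ powersetCard d E, (#(splitPairs X τ T) : ℝ) := by
        exact_mod_cast (h.sum_card_splitPairs hd).symm

lemma IsPairing.card_powersetCard_filter_sum_eq_le_of_mul_card_le (h : IsPairing E X τ)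
    (hne : ∀ i ∈ X, v (τ i) ≠ v i) (hδ : 0 < δ) (hX : δ * #E ≤ #X) (hd : 2 ≤ d)
    (hdE : 2 * d ≤ #E) (c : G) :
    (#{T ∈ powersetCard d E | ∑ i ∈ T, v i = c} : ℝ) ≤
      (√(2 / (δ * d)) + 4 / (δ * d)) * #(powersetCard d E) := by
  have hpos : (0 : ℝ) < #(powersetCard d E) := by
    rw [card_powersetCard]
    exact_mod_cast Nat.choose_pos (by omega)
  obtain ⟨μ, hμ⟩ : ∃ μ : ℝ,
      ∑ T ∈ powersetCard d E, (#(splitPairs X τ T) : ℝ) = μ * #(powersetCard d E) :=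
    ⟨_, (div_mul_cancel₀ _ hpos.ne').symm⟩
  have hmean : δ * d ≤ μ := by
    refine le_of_mul_le_mul_right ?_ hpos
    rw [← hμ]
    exact h.mul_card_powersetCard_le_sum_card_splitPairs hδ.le hX (one_le_two.trans hd) hdE
  have hδd : 0 < δ * d := by positivity
  have hvar := h.sum_card_splitPairs_sub_sq_le hd (by omega) hμ
  calc (#{T ∈ powersetCard d E | ∑ i ∈ T, v i = c} : ℝ)
      ≤ ∑ T ∈ powersetCard d E, 1 / √(#(splitPairs X τ T) + 1) :=
        h.card_powersetCard_filter_sum_eq_le hne d c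
    _ ≤ (√(2 / μ) + 4 / μ) * #(powersetCard d E) :=
        sum_one_div_sqrt_add_one_le (hδd.trans_le hmean) (fun _ _ => by positivity) hvar
    _ ≤ (√(2 / (δ * d)) + 4 / (δ * d)) * #(powersetCard d E) := by gcongr

lemma sqrt_div_add_div_le_div_sqrt {a b x : ℝ} (hb : 0 ≤ b) (hx : 1 ≤ x) :
    √(a / x) + b / x ≤ (√a + b) / √x := by
  rw [add_div, Real.sqrt_div' _ (by linarith)]
  gcongr
  exact (Real.sqrt_le_left (by linarith)).2 (le_self_pow₀ hx two_ne_zero)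

theorem card_powersetCard_filter_sum_eq_le_div_sqrt (hδ : 0 < δ)
    (hlevel : ∀ a, (#{i ∈ E | v i = a} : ℝ) ≤ (1 - 2 * δ) * #E) (hd : 1 ≤ d)
    (hdE : 2 * d ≤ #E) (c : G) :
    (#{T ∈ powersetCard d E | ∑ i ∈ T, v i = c} : ℝ) ≤
      (√(2 / δ) + 4 / δ) / √d * #(powersetCard d E) := by
  obtain ⟨X, τ, h, hne, hcard⟩ := exists_isPairing_of_card_level_le fun a =>
    Nat.le_floor (hlevel a)
  have hfloor : (⌊(1 - 2 * δ) * #E⌋₊ : ℝ) ≤ (1 - 2 * δ) * #E :=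
    Nat.floor_le ((Nat.cast_nonneg _).trans (hlevel 0))
  have hX : δ * #E ≤ #X := by
    have : (#E : ℝ) ≤ 2 * #X + ⌊(1 - 2 * δ) * #E⌋₊ := by exact_mod_cast hcard
    linarith
  rcases hd.eq_or_lt with rfl | hd
  · have hE : (0 : ℝ) < #E := by exact_mod_cast (by omega : 0 < #E)
    have hδ1 : δ ≤ 1 := by
      refine le_of_mul_le_mul_right ?_ hE
      rw [one_mul]
      exact hX.trans (by exact_mod_cast card_le_card h.subset)
    have hone : 1 ≤ (√(2 / δ) + 4 / δ) / √(1 : ℕ) := by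
      rw [Nat.cast_one, Real.sqrt_one, div_one]
      exact le_add_of_nonneg_of_le (by positivity) ((one_le_div₀ hδ).2 (by linarith))
    calc (#{T ∈ powersetCard 1 E | ∑ i ∈ T, v i = c} : ℝ) ≤ #(powersetCard 1 E) := by
          exact_mod_cast card_filter_le _ _
      _ ≤ _ := le_mul_of_one_le_left (by positivity) hone
  · refine (h.card_powersetCard_filter_sum_eq_le_of_mul_card_le hne hδ hX hd hdE c).trans ?_
    rw [← div_div, ← div_div]
    gcongr
    exact sqrt_div_add_div_le_div_sqrt (by positivity) (by exact_mod_cast hd.le)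

end Slice

section AppendedVector

variable {n : ℕ} {E T : Finset (Fin n)}

lemma xVec_dotProduct (hT : T ⊆ E) (z v : Fin n → ℝ) :
    xVec E T z ⬝ᵥ v = ∑ i ∈ T, v i + ∑ i ∈ Eᶜ, z i * v i := by
  have hpoint (i : Fin n) : xVec E T z i * v i =
      (if i ∈ T then v i else 0) + if i ∈ Eᶜ then z i * v i else 0 := by
    have := @hT i
    by_cases hiT : i ∈ T <;> by_cases hiE : i ∈ E <;> simp_all [xVec]
  simp only [dotProduct, hpoint, sum_add_distrib, sum_ite_mem, univ_inter]

lemma IsBalancedVec.card_filter_eq_le {η : ℝ} {v : Fin n → ℝ} (hv : IsBalancedVec η v)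
    (hη : 0 ≤ η) (hE : (n : ℝ) * (1 - η / 3) ≤ #E) (a : ℝ) :
    (#{i ∈ E | v i = a} : ℝ) ≤ (1 - 2 * (η / 3)) * #E := by
  have hlevel : (#{i ∈ E | v i = a} : ℝ) ≤ (1 - η) * n := by
    refine le_trans ?_ (hv a)
    rw [Set.ncard_eq_toFinset_card']
    exact_mod_cast card_le_card fun i hi => by simpa using (mem_filter.1 hi).2
  have hEn : (#E : ℝ) ≤ n := by exact_mod_cast card_finset_fin_le E
  have hηE := mul_le_mul_of_nonneg_left hEn hη
  linarith

end AppendedVector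

theorem corank_boosting_symmetric_general {η : ℝ} (hη : 0 < η) {n : ℕ}
    {A : Matrix (Fin n) (Fin n) ℝ} (hA : A.IsSymm) {E : Finset (Fin n)}
    (hE : (n : ℝ) * (1 - η / 3) ≤ #E) {d : ℕ} (hd : 1 ≤ d) (hdE : 2 * d ≤ #E)
    (z : Fin n → ℝ) {v : Fin n → ℝ} (hv : A *ᵥ v = 0) (hbal : IsBalancedVec η v) :
    (1 - (√(6 / η) + 12 / η) / √d) * (#(powersetCard d E) : ℝ) ≤
      #{T ∈ powersetCard d E | (appendRowCol A (xVec E T z)).rank = A.rank + 2} := by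
  have hbad : #{T ∈ powersetCard d E | ¬(appendRowCol A (xVec E T z)).rank = A.rank + 2} ≤
      #{T ∈ powersetCard d E | ∑ i ∈ T, v i = -∑ i ∈ Eᶜ, z i * v i} := by
    refine card_le_card fun T hT => ?_
    obtain ⟨hTE, hrank⟩ := mem_filter.1 hT
    refine mem_filter.2 ⟨hTE, eq_neg_of_add_eq_zero_left ?_⟩
    rw [← xVec_dotProduct (mem_powersetCard.1 hTE).1]
    exact not_not.1 fun hne => hrank (rank_appendRowCol_eq_add_two hA hv hne)
  have hslice := card_powersetCard_filter_sum_eq_le_div_sqrt (div_pos hη three_pos)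
    (hbal.card_filter_eq_le hη.le hE) hd hdE (-∑ i ∈ Eᶜ, z i * v i)
  have hsplit := card_filter_add_card_filter_not (s := powersetCard d E)
    fun T => (appendRowCol A (xVec E T z)).rank = A.rank + 2
  rw [show 2 / (η / 3) = 6 / η by ring, show 4 / (η / 3) = 12 / η by ring] at hslice
  have hbadReal := (Nat.cast_le (α := ℝ)).2 hbad
  have hsplitReal := congrArg (Nat.cast (R := ℝ)) hsplit
  rw [Nat.cast_add] at hsplitReal
  linarith

/-- Appending a random sparse 0/1 row and column to a symmetric matrix with an
`η`-balanced kernel vector increases the rank by exactly 2, with probability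
`1 − O_η(1/√d)`. -/
theorem corank_boosting_symmetric (η : ℝ) (hη₁ : 0 < η) (hη₂ : η < 1 / 2) :
    ∃ C : ℝ, 0 < C ∧
      ∀ (n : ℕ) (A : Matrix (Fin n) (Fin n) ℝ) (E : Finset (Fin n)) (d : ℕ)
        (z : Fin n → ℝ),
        A.IsSymm →
        (n : ℝ) * (1 - η / 3) ≤ (E.card : ℝ) →
        1 ≤ d → 2 * d ≤ E.card →
        (∀ i ∉ E, z i = 0 ∨ z i = 1) →
        (∃ v : Fin n → ℝ, A.mulVec v = 0 ∧ IsBalancedVec η v) →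
        (1 - C / Real.sqrt d) * ((Finset.powersetCard d E).card : ℝ) ≤
          (((Finset.powersetCard d E).filter fun T =>
            (appendRowCol A (xVec E T z)).rank = A.rank + 2).card : ℝ) := by
  refine ⟨√(6 / η) + 12 / η, by positivity, ?_⟩
  rintro n A E d z hA hE hd hdE - ⟨v, hv, hbal⟩
  exact corank_boosting_symmetric_general hη₁ hA hE hd hdE z hv hbal
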